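/- arXiv:1810.00877 — 2 statements merged into one kernel-verified Lean document; each statement's English description precedes it below -/
import Mathlib

section
/- Let 0 < δ < 1/2, ε > 0, Δ > 0. Then the minimum noise power V_opt^{L2}(ε, δ, Δ) satisfies the upper bound V_opt^{L2}(ε, δ, Δ) ≤ (2Δ²/ε²)·(1 − ((1/2)·log²(1 + (e^ε − 1)/(2δ)) + log(1 + (e^ε − 1)/(2δ))) / ((e^ε − 1)/(2δ))). -/
/-!
The bound is achieved by the truncated Laplacian: the density proportional to `exp (-|x| / l)` on
`[-A, A]`, with scale `l = Δ / ε`. Shifting the noise by `d`, where `0 ≤ d ≤ Δ`, changes the density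
by a factor of at most `exp (Δ / l) = exp ε`, except at the points of `(A - Δ, A]` that leave the
support. So `δ` only has to pay for the mass of that tail, which is at most
`(exp ε - 1) / (2 * (exp (A / l) - 1))`. Choosing `A` to make this equal to `δ` gives
`A / l = log (1 + (exp ε - 1) / (2 * δ))`, and the second moment of the resulting distribution is
exactly the claimed bound.
-/

open MeasureTheory Real

/-- The (ε,δ)-differential-privacy constraint with sensitivity `Δ` on a noise
distribution `P` on ℝ: for every `d` with `|d| ≤ Δ` and every Borel set `S`,
`P(S) ≤ e^ε · P(S + d) + δ`. -/
def SatisfiesDP (ε δ Δ : ℝ) (P : Measure ℝ) : Prop :=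
  ∀ d : ℝ, |d| ≤ Δ → ∀ S : Set ℝ, MeasurableSet S →
    P S ≤ ENNReal.ofReal (Real.exp ε) * P ((fun s => s + d) '' S) + ENNReal.ofReal δ

/-- The minimum noise power: the infimum of `∫ x² dP(x)` over all Borel
probability measures `P` on ℝ satisfying the (ε,δ)-DP constraint with sensitivity Δ. -/
noncomputable def VoptL2 (ε δ Δ : ℝ) : ENNReal :=
  ⨅ (P : Measure ℝ) (_ : IsProbabilityMeasure P) (_ : SatisfiesDP ε δ Δ P),
    ∫⁻ x : ℝ, ENNReal.ofReal (x ^ 2) ∂P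

open Set
open scoped ENNReal

theorem lintegral_comp_abs (g : ℝ → ℝ≥0∞) : ∫⁻ x, g |x| = 2 * ∫⁻ x in Ioi 0, g x := by
  have hpos : ∫⁻ x in Ioi (0 : ℝ), g |x| = ∫⁻ x in Ioi 0, g x :=
    setLIntegral_congr_fun measurableSet_Ioi fun x hx => by rw [abs_of_pos hx]
  have hneg : ∫⁻ x in Iic (0 : ℝ), g |x| = ∫⁻ x in Ioi 0, g x := by
    rw [← hpos, setLIntegral_congr Ioi_ae_eq_Ici,
      ← (Measure.measurePreserving_neg volume).setLIntegral_comp_preimage_emb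
        (MeasurableEquiv.neg ℝ).measurableEmbedding]
    simp
  rw [← lintegral_add_compl _ measurableSet_Ioi, compl_Ioi, hpos, hneg, two_mul]

theorem setLIntegral_Ioc_ofReal_eq_sub_of_hasDerivAt {F f : ℝ → ℝ} {a b : ℝ} (hab : a ≤ b)
    (hcont : ContinuousOn F (Icc a b)) (hderiv : ∀ x ∈ Ioo a b, HasDerivAt F (f x) x)
    (hf : ∀ x ∈ Ioo a b, 0 ≤ f x) :
    ∫⁻ x in Ioc a b, ENNReal.ofReal (f x) = ENNReal.ofReal (F b - F a) := by
  have hint : IntegrableOn f (Ioc a b) :=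
    intervalIntegral.integrableOn_deriv_of_nonneg hcont hderiv hf
  have hFTC : ∫ x in Ioc a b, f x = F b - F a := by
    rw [← intervalIntegral.integral_of_le hab]
    exact intervalIntegral.integral_eq_sub_of_hasDerivAt_of_le hab hcont hderiv
      ((intervalIntegrable_iff_integrableOn_Ioc_of_le hab).2 hint)
  rw [← hFTC, integral_Ioc_eq_integral_Ioo, setLIntegral_congr Ioo_ae_eq_Ioc.symm]
  exact (ofReal_integral_eq_lintegral_ofReal (hint.mono_set Ioo_subset_Ioc_self)
    (ae_restrict_of_forall_mem measurableSet_Ioo hf)).symm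

section ExpNegDiv

variable {l : ℝ}

theorem hasDerivAt_exp_neg_div (l x : ℝ) :
    HasDerivAt (fun y => exp (-y / l)) (exp (-x / l) * (-1 / l)) x :=
  ((hasDerivAt_id x).neg.div_const l).exp

theorem setLIntegral_Ioc_exp_neg_div (hl : l ≠ 0) {a b : ℝ} (hab : a ≤ b) :
    ∫⁻ x in Ioc a b, ENNReal.ofReal (exp (-x / l)) =
      ENNReal.ofReal (l * (exp (-a / l) - exp (-b / l))) := by
  have hderiv (x : ℝ) : HasDerivAt (fun y => -l * exp (-y / l)) (exp (-x / l)) x :=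
    ((hasDerivAt_exp_neg_div l x).const_mul (-l)).congr_deriv (by field)
  rw [setLIntegral_Ioc_ofReal_eq_sub_of_hasDerivAt hab (by fun_prop) (fun x _ => hderiv x)
    (fun x _ => (exp_pos _).le)]
  congr 1
  ring

theorem setLIntegral_Ioc_exp_neg_div_mul_sq (hl : l ≠ 0) {a b : ℝ} (hab : a ≤ b) :
    ∫⁻ x in Ioc a b, ENNReal.ofReal (exp (-x / l) * x ^ 2) =
      ENNReal.ofReal (l * (exp (-a / l) * (a ^ 2 + 2 * l * a + 2 * l ^ 2) -
        exp (-b / l) * (b ^ 2 + 2 * l * b + 2 * l ^ 2))) := by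
  have hpoly (x : ℝ) :
      HasDerivAt (fun y => y ^ 2 + 2 * l * y + 2 * l ^ 2) (2 * x + 2 * l) x := by
    simpa using ((hasDerivAt_pow 2 x).add ((hasDerivAt_id x).const_mul (2 * l))).add_const
      (2 * l ^ 2)
  have hderiv (x : ℝ) :
      HasDerivAt (fun y => -l * (exp (-y / l) * (y ^ 2 + 2 * l * y + 2 * l ^ 2)))
        (exp (-x / l) * x ^ 2) x :=
    (((hasDerivAt_exp_neg_div l x).mul (hpoly x)).const_mul (-l)).congr_deriv (by field)
  rw [setLIntegral_Ioc_ofReal_eq_sub_of_hasDerivAt hab (by fun_prop) (fun x _ => hderiv x)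
    (fun x _ => by positivity)]
  congr 1
  ring

theorem exp_neg_abs_div_le (hl : 0 ≤ l) {Δ d : ℝ} (hd : |d| ≤ Δ) (x : ℝ) :
    exp (-|x| / l) ≤ exp (Δ / l) * exp (-|x + d| / l) := by
  rw [← exp_add, ← add_div]
  gcongr
  linarith [abs_add_le x d]

end ExpNegDiv

section DensityCriteria

variable {ε δ Δ : ℝ} {f : ℝ → ℝ≥0∞}

-- Subtraction in `ℝ≥0∞` truncates at `0`, so the integral is the hockey-stick divergence between
-- the noise and its shift.
theorem satisfiesDP_withDensity_of_lintegral_sub_le (hf : Measurable f)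
    (h : ∀ d, |d| ≤ Δ →
      ∫⁻ x, (f x - ENNReal.ofReal (exp ε) * f (x + d)) ≤ ENNReal.ofReal δ) :
    SatisfiesDP ε δ Δ (volume.withDensity f) := by
  intro d hd S hS
  have hemb : MeasurableEmbedding fun s : ℝ => s + d :=
    (MeasurableEquiv.addRight d).measurableEmbedding
  rw [withDensity_apply _ hS, withDensity_apply _ (hemb.measurableSet_image.2 hS),
    ← (measurePreserving_add_right volume d).setLIntegral_comp_emb hemb]
  calc ∫⁻ x in S, f x
      ≤ ∫⁻ x in S, (ENNReal.ofReal (exp ε) * f (x + d) +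
          (f x - ENNReal.ofReal (exp ε) * f (x + d))) :=
        lintegral_mono fun x => le_add_tsub
    _ = (ENNReal.ofReal (exp ε) * ∫⁻ x in S, f (x + d)) +
          ∫⁻ x in S, (f x - ENNReal.ofReal (exp ε) * f (x + d)) := by
        rw [lintegral_add_left (by fun_prop), lintegral_const_mul _ (by fun_prop)]
    _ ≤ (ENNReal.ofReal (exp ε) * ∫⁻ x in S, f (x + d)) + ENNReal.ofReal δ := by
        gcongr
        exact (setLIntegral_le_lintegral _ _).trans (h d hd)

theorem satisfiesDP_withDensity_of_even_of_lintegral_sub_le (hf : Measurable f) (heven : f.Even)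
    (h : ∀ d, 0 ≤ d → d ≤ Δ →
      ∫⁻ x, (f x - ENNReal.ofReal (exp ε) * f (x + d)) ≤ ENNReal.ofReal δ) :
    SatisfiesDP ε δ Δ (volume.withDensity f) := by
  refine satisfiesDP_withDensity_of_lintegral_sub_le hf fun d hd => ?_
  rcases le_total 0 d with hd0 | hd0
  · exact h d hd0 (le_of_abs_le hd)
  · rw [← lintegral_neg_eq_self]
    have hneg (x : ℝ) : f (-x + d) = f (x + -d) := by rw [← heven, neg_add, neg_neg]
    simp only [heven _, hneg]
    exact h (-d) (neg_nonneg.2 hd0) (abs_of_nonpos hd0 ▸ hd)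

end DensityCriteria

theorem VoptL2_le_lintegral_sq {ε δ Δ : ℝ} {P : Measure ℝ} [IsProbabilityMeasure P]
    (hP : SatisfiesDP ε δ Δ P) : VoptL2 ε δ Δ ≤ ∫⁻ x, ENNReal.ofReal (x ^ 2) ∂P :=
  iInf_le_of_le P (iInf₂_le ‹_› hP)

/-- The normalizing constant of the truncated Laplace density: the inverse of
`∫ x in -A..A, exp (-|x| / l)`. -/
noncomputable def truncatedLaplaceConst (l A : ℝ) : ℝ :=
  (2 * l * (1 - exp (-A / l)))⁻¹

/-- The density of the truncated Laplace distribution with scale `l` and support `[-A, A]`. -/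
noncomputable def truncatedLaplacePDF (l A x : ℝ) : ℝ≥0∞ :=
  if |x| ≤ A then ENNReal.ofReal (truncatedLaplaceConst l A * exp (-|x| / l)) else 0

/-- The truncated Laplace distribution with scale `l` and support `[-A, A]`; it is a probability
measure when `0 < l` and `0 < A`. -/
noncomputable def truncatedLaplaceMeasure (l A : ℝ) : Measure ℝ :=
  volume.withDensity (truncatedLaplacePDF l A)

section TruncatedLaplace

variable {l A : ℝ}

theorem truncatedLaplaceConst_eq_exp_div (l A : ℝ) :
    truncatedLaplaceConst l A = exp (A / l) / (2 * l * (exp (A / l) - 1)) := by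
  have : 1 - exp (-A / l) = (exp (A / l) - 1) / exp (A / l) := by
    rw [neg_div, exp_neg]
    field
  rw [truncatedLaplaceConst, this, ← mul_div_assoc, inv_div]

theorem exp_div_sub_one_pos (hl : 0 < l) (hA : 0 < A) : 0 < exp (A / l) - 1 :=
  sub_pos.2 (one_lt_exp_iff.2 (div_pos hA hl))

theorem truncatedLaplaceConst_pos (hl : 0 < l) (hA : 0 < A) : 0 < truncatedLaplaceConst l A := by
  have := exp_div_sub_one_pos hl hA
  rw [truncatedLaplaceConst_eq_exp_div]
  positivity

@[fun_prop]
theorem measurable_truncatedLaplacePDF (l A : ℝ) : Measurable (truncatedLaplacePDF l A) :=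
  Measurable.ite (measurableSet_le (by fun_prop) (by fun_prop)) (by fun_prop) (by fun_prop)

theorem even_truncatedLaplacePDF (l A : ℝ) : (truncatedLaplacePDF l A).Even := fun x => by
  simp only [truncatedLaplacePDF, abs_neg]

theorem lintegral_comp_abs_truncatedLaplaceMeasure (l A : ℝ) {φ : ℝ → ℝ≥0∞} (hφ : Measurable φ) :
    ∫⁻ x, φ |x| ∂truncatedLaplaceMeasure l A = 2 * (ENNReal.ofReal (truncatedLaplaceConst l A) *
      ∫⁻ x in Ioc 0 A, ENNReal.ofReal (exp (-x / l)) * φ x) := by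
  let g : ℝ → ℝ≥0∞ := (Iic A).indicator fun r =>
    ENNReal.ofReal (truncatedLaplaceConst l A) * (ENNReal.ofReal (exp (-r / l)) * φ r)
  have hg (x : ℝ) : truncatedLaplacePDF l A x * φ |x| = g |x| := by
    simp only [truncatedLaplacePDF, g, indicator_apply, mem_Iic, ite_mul, zero_mul,
      ENNReal.ofReal_mul' (exp_pos _).le, mul_assoc]
  calc ∫⁻ x, φ |x| ∂truncatedLaplaceMeasure l A
      = ∫⁻ x, truncatedLaplacePDF l A x * φ |x| :=
        lintegral_withDensity_eq_lintegral_mul _ (by fun_prop) (by fun_prop)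
    _ = 2 * ∫⁻ x in Ioi 0, g x := by
        simp only [hg]
        exact lintegral_comp_abs g
    _ = _ := by
        rw [setLIntegral_indicator measurableSet_Iic, inter_comm, Ioi_inter_Iic,
          lintegral_const_mul _ (by fun_prop)]

theorem isProbabilityMeasure_truncatedLaplaceMeasure (hl : 0 < l) (hA : 0 < A) :
    IsProbabilityMeasure (truncatedLaplaceMeasure l A) := by
  have hE := (exp_div_sub_one_pos hl hA).ne'
  have hmass : 2 * (truncatedLaplaceConst l A * (l * (exp (-0 / l) - exp (-A / l)))) = 1 := by
    rw [truncatedLaplaceConst_eq_exp_div, neg_div, neg_div, exp_neg, exp_neg, zero_div, exp_zero]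
    field
  constructor
  calc truncatedLaplaceMeasure l A univ
      = ∫⁻ _, 1 ∂truncatedLaplaceMeasure l A := lintegral_one.symm
    _ = ENNReal.ofReal
          (2 * (truncatedLaplaceConst l A * (l * (exp (-0 / l) - exp (-A / l))))) := by
        rw [lintegral_comp_abs_truncatedLaplaceMeasure l A (φ := fun _ => 1) measurable_const]
        simp only [mul_one]
        rw [setLIntegral_Ioc_exp_neg_div hl.ne' hA.le,
          ← ENNReal.ofReal_mul (truncatedLaplaceConst_pos hl hA).le,
          ← ENNReal.ofReal_ofNat 2, ← ENNReal.ofReal_mul zero_le_two]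
    _ = 1 := by rw [hmass, ENNReal.ofReal_one]

theorem lintegral_sq_truncatedLaplaceMeasure (hl : 0 < l) (hA : 0 < A) :
    ∫⁻ x, ENNReal.ofReal (x ^ 2) ∂truncatedLaplaceMeasure l A =
      ENNReal.ofReal (2 * l ^ 2 *
        (1 - ((1 / 2) * (A / l) ^ 2 + A / l) / (exp (A / l) - 1))) := by
  have hE := (exp_div_sub_one_pos hl hA).ne'
  rw [lintegral_congr fun x => congrArg ENNReal.ofReal (sq_abs x).symm,
    lintegral_comp_abs_truncatedLaplaceMeasure l A (φ := fun r => ENNReal.ofReal (r ^ 2))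
      (by fun_prop)]
  simp only [← ENNReal.ofReal_mul (exp_pos _).le]
  rw [setLIntegral_Ioc_exp_neg_div_mul_sq hl.ne' hA.le,
    ← ENNReal.ofReal_mul (truncatedLaplaceConst_pos hl hA).le,
    ← ENNReal.ofReal_ofNat 2, ← ENNReal.ofReal_mul zero_le_two]
  congr 1
  rw [truncatedLaplaceConst_eq_exp_div, neg_div, neg_div, exp_neg, exp_neg, zero_div, exp_zero]
  field

theorem truncatedLaplacePDF_sub_le (hl : 0 < l) (hA : 0 < A) {Δ d : ℝ} (hd0 : 0 ≤ d) (hd : d ≤ Δ)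
    (x : ℝ) :
    truncatedLaplacePDF l A x - ENNReal.ofReal (exp (Δ / l)) * truncatedLaplacePDF l A (x + d) ≤
      (Ioc (A - Δ) A).indicator
        (fun y => ENNReal.ofReal (truncatedLaplaceConst l A * exp (-y / l))) x := by
  have hB := truncatedLaplaceConst_pos hl hA
  by_cases hx : |x| ≤ A
  · by_cases hxd : |x + d| ≤ A
    · have hratio : truncatedLaplacePDF l A x ≤
          ENNReal.ofReal (exp (Δ / l)) * truncatedLaplacePDF l A (x + d) := by
        rw [truncatedLaplacePDF, truncatedLaplacePDF, if_pos hx, if_pos hxd,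
          ← ENNReal.ofReal_mul (exp_pos _).le, mul_left_comm]
        gcongr
        exact exp_neg_abs_div_le hl.le ((abs_of_nonneg hd0).trans_le hd) x
      rw [tsub_eq_zero_of_le hratio]
      exact zero_le
    · have htail : x ∈ Ioc (A - Δ) A := by
        rw [abs_le, not_and_or, not_le, not_le] at hxd
        have := abs_le.1 hx
        refine ⟨?_, this.2⟩
        rcases hxd with h | h <;> linarith
      rw [indicator_of_mem htail, truncatedLaplacePDF, if_pos hx]
      refine tsub_le_self.trans ?_
      gcongr
      exact le_abs_self x
  · rw [truncatedLaplacePDF, if_neg hx, zero_tsub]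
    exact zero_le

theorem satisfiesDP_truncatedLaplaceMeasure (hl : 0 < l) (hA : 0 < A) (Δ : ℝ) :
    SatisfiesDP (Δ / l) ((exp (Δ / l) - 1) / (2 * (exp (A / l) - 1))) Δ
      (truncatedLaplaceMeasure l A) := by
  refine satisfiesDP_withDensity_of_even_of_lintegral_sub_le (by fun_prop)
    (even_truncatedLaplacePDF l A) fun d hd0 hd => ?_
  have hB := truncatedLaplaceConst_pos hl hA
  refine (lintegral_mono (truncatedLaplacePDF_sub_le hl hA hd0 hd)).trans_eq ?_
  simp only [ENNReal.ofReal_mul hB.le]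
  rw [lintegral_indicator measurableSet_Ioc, lintegral_const_mul _ (by fun_prop),
    setLIntegral_Ioc_exp_neg_div hl.ne' (by linarith), ← ENNReal.ofReal_mul hB.le]
  have hE := (exp_div_sub_one_pos hl hA).ne'
  have hshift : exp (-(A - Δ) / l) = exp (Δ / l) / exp (A / l) := by
    rw [← exp_sub]
    ring_nf
  congr 1
  rw [hshift, truncatedLaplaceConst_eq_exp_div, neg_div, exp_neg]
  field

end TruncatedLaplace

theorem VoptL2_upper_bound_general {ε δ Δ : ℝ} (hδ : 0 < δ) (hε : 0 < ε) (hΔ : 0 < Δ) :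
    VoptL2 ε δ Δ ≤ ENNReal.ofReal ((2 * Δ ^ 2 / ε ^ 2) *
      (1 - ((1 / 2) * log (1 + (exp ε - 1) / (2 * δ)) ^ 2 + log (1 + (exp ε - 1) / (2 * δ))) /
        ((exp ε - 1) / (2 * δ)))) := by
  have hexp : 0 < exp ε - 1 := sub_pos.2 (one_lt_exp_iff.2 hε)
  set u := (exp ε - 1) / (2 * δ) with hu
  have hu0 : 0 < u := by positivity
  set l := Δ / ε with hl
  have hl0 : 0 < l := by positivity
  set A := l * log (1 + u) with hA
  have hA0 : 0 < A := mul_pos hl0 (log_pos (by linarith))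
  have hΔl : Δ / l = ε := by rw [hl]; field
  have hAl : A / l = log (1 + u) := by rw [hA]; field
  have hexpA : exp (A / l) - 1 = u := by rw [hAl, exp_log (by linarith)]; ring
  have hδu : (exp ε - 1) / (2 * u) = δ := by rw [hu]; field
  have hDP := satisfiesDP_truncatedLaplaceMeasure hl0 hA0 Δ
  have := isProbabilityMeasure_truncatedLaplaceMeasure hl0 hA0
  rw [hΔl, hexpA, hδu] at hDP
  refine (VoptL2_le_lintegral_sq hDP).trans_eq ?_
  rw [lintegral_sq_truncatedLaplaceMeasure hl0 hA0, hexpA, hAl, hl, div_pow, mul_div_assoc]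

/-- Upper bound on the minimum noise power achieved by the
truncated Laplacian mechanism. -/
theorem VoptL2_upper_bound
    (ε δ Δ : ℝ) (hδ0 : 0 < δ) (hδ : δ < 1 / 2) (hε : 0 < ε) (hΔ : 0 < Δ) :
    VoptL2 ε δ Δ
      ≤ ENNReal.ofReal ((2 * Δ ^ 2 / ε ^ 2) * (1 -
          ((1 / 2) * (Real.log (1 + (Real.exp ε - 1) / (2 * δ))) ^ 2
            + Real.log (1 + (Real.exp ε - 1) / (2 * δ)))
          / ((Real.exp ε - 1) / (2 * δ)))) :=
  VoptL2_upper_bound_general hδ0 hε hΔ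
end

section
/- Fix ε > 0 and Δ > 0. Then the minimum noise amplitude satisfies liminf_{δ → 0⁺} V_opt^{L1}(ε, δ, Δ) ≥ Δ/(e^ε − 1) and limsup_{δ → 0⁺} V_opt^{L1}(ε, δ, Δ) ≤ Δ/ε, so the multiplicative gap between these limiting lower and upper bounds is ε/(e^ε − 1) = 1 − ε/2 + O(ε²). -/
open MeasureTheory Real Filter Topology

/-- The minimum noise amplitude. -/
noncomputable def VoptL1 (ε δ Δ : ℝ) : ENNReal :=
  ⨅ (P : Measure ℝ) (_ : IsProbabilityMeasure P) (_ : SatisfiesDP ε δ Δ P),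
    ∫⁻ x : ℝ, ENNReal.ofReal |x| ∂P

/-!
Lower bound: translating the two half-lines `[t, ∞)` and `(-∞, -t]` outwards by `Δ` shows that one
step of length `Δ` shrinks the tail `P {t ≤ |x|}` at most by the factor `q = e^(-ε)`, up to an error
of order `δ`. Hence `P {nΔ ≤ |x|} ≥ q ^ n - 2nδ`, and since `|x| ≥ Δ · #{n ≥ 1 | nΔ ≤ |x|}` the
cost is at least `Δ ∑_{1 ≤ n ≤ N} (q ^ n - 2nδ)`. Letting `δ → 0` first and `N → ∞` afterwards
gives `Δ q / (1 - q) = Δ / (e^ε - 1)`.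

Upper bound: the Laplace distribution of scale `Δ / ε` satisfies the constraint even for `δ = 0`,
and its mean absolute value is its scale.
-/

theorem mul_sum_measure_ge_le_lintegral {α : Type*} [MeasurableSpace α] (μ : Measure α)
    {f : α → ENNReal} (hf : Measurable f) (a : ENNReal) (N : ℕ) :
    a * ∑ k ∈ Finset.range N, μ {x | (k + 1) * a ≤ f x} ≤ ∫⁻ x, f x ∂μ := by
  have hmeas (k : ℕ) : MeasurableSet {x | (k + 1) * a ≤ f x} :=
    measurableSet_le measurable_const hf
  have pointwise_le (x : α) :
      ∑ k ∈ Finset.range N, {y | (k + 1) * a ≤ f y}.indicator (fun _ => a) x ≤ f x := by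
    induction N with
    | zero => simp
    | succ N ih =>
      by_cases hx : x ∈ {y | (N + 1) * a ≤ f y}
      · calc
          _ ≤ ∑ _k ∈ Finset.range (N + 1), a :=
            Finset.sum_le_sum fun k _ => Set.indicator_le_self _ _ x
          _ = (N + 1) * a := by simp
          _ ≤ f x := hx
      · rw [Finset.sum_range_succ, Set.indicator_of_notMem hx, add_zero]
        exact ih
  calc
    _ = ∫⁻ x, ∑ k ∈ Finset.range N, {y | (k + 1) * a ≤ f y}.indicator (fun _ => a) x ∂μ := by
      rw [lintegral_finsetSum _ fun k _ => measurable_const.indicator (hmeas k), Finset.mul_sum]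
      exact Finset.sum_congr rfl fun k _ => (lintegral_indicator_const (hmeas k) a).symm
    _ ≤ ∫⁻ x, f x ∂μ := lintegral_mono pointwise_le

theorem tsum_ofReal_exp_neg_pow_succ {ε : ℝ} (hε : 0 < ε) :
    ∑' k : ℕ, ENNReal.ofReal (exp (-ε)) ^ (k + 1) = ENNReal.ofReal (exp ε - 1)⁻¹ := by
  have hlt : exp (-ε) < 1 := exp_lt_one_iff.2 (neg_lt_zero.2 hε)
  rw [ENNReal.tsum_geometric_add_one, ← ENNReal.ofReal_one, ← ENNReal.ofReal_sub _ (exp_nonneg _),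
    ← ENNReal.ofReal_inv_of_pos (sub_pos.2 hlt), ← ENNReal.ofReal_mul (exp_nonneg _),
    exp_neg, ← mul_inv, mul_sub, mul_one, mul_inv_cancel₀ (exp_ne_zero ε)]

namespace SatisfiesDP

variable {ε δ Δ : ℝ} {P : Measure ℝ}

theorem exp_neg_mul_measure_le (h : SatisfiesDP ε δ Δ P) (hε : 0 ≤ ε) {d : ℝ} (hd : |d| ≤ Δ)
    {S : Set ℝ} (hS : MeasurableSet S) :
    ENNReal.ofReal (exp (-ε)) * P S ≤ P ((fun s => s + d) '' S) + ENNReal.ofReal δ := by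
  have hle : ENNReal.ofReal (exp (-ε)) ≤ 1 := by simpa using hε
  calc
    _ ≤ ENNReal.ofReal (exp (-ε)) *
        (ENNReal.ofReal (exp ε) * P ((fun s => s + d) '' S) + ENNReal.ofReal δ) := by
      gcongr
      exact h d hd S hS
    _ = P ((fun s => s + d) '' S) + ENNReal.ofReal (exp (-ε)) * ENNReal.ofReal δ := by
      rw [mul_add, ← mul_assoc, ← ENNReal.ofReal_mul (exp_nonneg _), ← exp_add, neg_add_cancel,
        exp_zero, ENNReal.ofReal_one, one_mul]
    _ ≤ _ := by
      gcongr
      exact mul_le_of_le_one_left' hle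

theorem exp_neg_mul_measure_abs_ge_le (h : SatisfiesDP ε δ Δ P) (hε : 0 ≤ ε) (hΔ : 0 ≤ Δ) {t : ℝ}
    (ht : 0 < t + Δ) :
    ENNReal.ofReal (exp (-ε)) * P {x | t ≤ |x|} ≤
      P {x | t + Δ ≤ |x|} + 2 * ENNReal.ofReal δ := by
  have hset (s : ℝ) : {x : ℝ | s ≤ |x|} = Set.Ici s ∪ Set.Iic (-s) := by
    ext x
    simp [le_abs, le_neg]
  have hdisj : Disjoint (Set.Ici (t + Δ)) (Set.Iic (-(t + Δ))) :=
    Set.Ici_disjoint_Iic.2 (by linarith)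
  have hright := h.exp_neg_mul_measure_le hε (abs_of_nonneg hΔ).le (measurableSet_Ici (a := t))
  have hleft := h.exp_neg_mul_measure_le hε (d := -Δ) (by rw [abs_neg, abs_of_nonneg hΔ])
    (measurableSet_Iic (a := -t))
  rw [Set.image_add_const_Ici] at hright
  rw [Set.image_add_const_Iic, ← neg_add] at hleft
  calc
    _ ≤ ENNReal.ofReal (exp (-ε)) * (P (Set.Ici t) + P (Set.Iic (-t))) := by
      rw [hset]
      gcongr
      exact measure_union_le _ _
    _ ≤ (P (Set.Ici (t + Δ)) + ENNReal.ofReal δ) +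
        (P (Set.Iic (-(t + Δ))) + ENNReal.ofReal δ) := by
      rw [mul_add]
      exact add_le_add hright hleft
    _ = P {x | t + Δ ≤ |x|} + 2 * ENNReal.ofReal δ := by
      rw [hset, measure_union hdisj measurableSet_Iic]
      ring

theorem exp_neg_pow_mul_measure_univ_le (h : SatisfiesDP ε δ Δ P) (hε : 0 ≤ ε) (hΔ : 0 < Δ)
    (n : ℕ) :
    ENNReal.ofReal (exp (-ε)) ^ n * P Set.univ ≤
      P {x | n * Δ ≤ |x|} + 2 * n * ENNReal.ofReal δ := by
  have hle : ENNReal.ofReal (exp (-ε)) ≤ 1 := by simpa using hε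
  induction n with
  | zero => simp
  | succ n ih =>
    have hstep := h.exp_neg_mul_measure_abs_ge_le hε hΔ.le (t := n * Δ) (by positivity)
    calc
      _ = ENNReal.ofReal (exp (-ε)) * (ENNReal.ofReal (exp (-ε)) ^ n * P Set.univ) := by ring
      _ ≤ ENNReal.ofReal (exp (-ε)) * (P {x | n * Δ ≤ |x|} + 2 * n * ENNReal.ofReal δ) := by
        gcongr
      _ ≤ (P {x | n * Δ + Δ ≤ |x|} + 2 * ENNReal.ofReal δ) + 2 * n * ENNReal.ofReal δ := by
        rw [mul_add]
        exact add_le_add hstep (mul_le_of_le_one_left' hle)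
      _ = _ := by
        push_cast
        rw [add_one_mul (n : ℝ)]
        ring

theorem mul_sum_le_lintegral_abs [IsProbabilityMeasure P] (h : SatisfiesDP ε δ Δ P) (hε : 0 ≤ ε)
    (hΔ : 0 < Δ) (N : ℕ) :
    ENNReal.ofReal Δ * ∑ k ∈ Finset.range N,
        (ENNReal.ofReal (exp (-ε)) ^ (k + 1) - 2 * (k + 1) * ENNReal.ofReal δ) ≤
      ∫⁻ x, ENNReal.ofReal |x| ∂P := by
  refine le_trans ?_ (mul_sum_measure_ge_le_lintegral P (by fun_prop) (ENNReal.ofReal Δ) N)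
  gcongr with k
  have htail := h.exp_neg_pow_mul_measure_univ_le hε hΔ (k + 1)
  rw [measure_univ, mul_one] at htail
  push_cast at htail
  refine (tsub_le_iff_right.2 htail).trans (measure_mono fun x hx => ?_)
  calc
    (k + 1) * ENNReal.ofReal Δ = ENNReal.ofReal ((k + 1) * Δ) := by
      rw [ENNReal.ofReal_mul (by positivity)]
      norm_cast
    _ ≤ ENNReal.ofReal |x| := ENNReal.ofReal_le_ofReal hx

end SatisfiesDP

theorem mul_sum_le_VoptL1 {ε Δ : ℝ} (hε : 0 ≤ ε) (hΔ : 0 < Δ) (δ : ℝ) (N : ℕ) :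
    ENNReal.ofReal Δ * ∑ k ∈ Finset.range N,
        (ENNReal.ofReal (exp (-ε)) ^ (k + 1) - 2 * (k + 1) * ENNReal.ofReal δ) ≤ VoptL1 ε δ Δ :=
  le_iInf fun _ => le_iInf fun _ => le_iInf fun h => h.mul_sum_le_lintegral_abs hε hΔ N

theorem mul_sum_exp_neg_pow_le_liminf_VoptL1 {ε Δ : ℝ} (hε : 0 ≤ ε) (hΔ : 0 < Δ) (N : ℕ) :
    ENNReal.ofReal Δ * ∑ k ∈ Finset.range N, ENNReal.ofReal (exp (-ε)) ^ (k + 1) ≤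
      liminf (fun δ => VoptL1 ε δ Δ) (𝓝[>] 0) := by
  have hterm (k : ℕ) : Tendsto
      (fun δ => ENNReal.ofReal (exp (-ε)) ^ (k + 1) - 2 * (k + 1) * ENNReal.ofReal δ) (𝓝[>] 0)
      (𝓝 (ENNReal.ofReal (exp (-ε)) ^ (k + 1))) := by
    have hδ : Tendsto ENNReal.ofReal (𝓝[>] 0) (𝓝 0) := by
      simpa using (ENNReal.continuous_ofReal.tendsto 0).mono_left nhdsWithin_le_nhds
    have herror := ENNReal.Tendsto.const_mul (a := 2 * (k + 1)) hδ (Or.inr (by finiteness))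
    simpa using ENNReal.Tendsto.sub tendsto_const_nhds herror (Or.inr (by simp))
  have hsum := ENNReal.Tendsto.const_mul (tendsto_finsetSum (Finset.range N) fun k _ => hterm k)
    (Or.inr (ENNReal.ofReal_ne_top (r := Δ)))
  rw [← hsum.liminf_eq]
  exact liminf_le_liminf (.of_forall fun δ => mul_sum_le_VoptL1 hε hΔ δ N)

theorem le_liminf_VoptL1 {ε Δ : ℝ} (hε : 0 < ε) (hΔ : 0 < Δ) :
    ENNReal.ofReal (Δ / (exp ε - 1)) ≤ liminf (fun δ => VoptL1 ε δ Δ) (𝓝[>] 0) := by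
  rw [div_eq_mul_inv, ENNReal.ofReal_mul hΔ.le, ← tsum_ofReal_exp_neg_pow_succ hε,
    ← ENNReal.tsum_mul_left]
  refine ENNReal.tsum_le_of_sum_range_le fun N => ?_
  rw [← Finset.mul_sum]
  exact mul_sum_exp_neg_pow_le_liminf_VoptL1 hε.le hΔ N

theorem satisfiesDP_withDensity {ε Δ : ℝ} {f : ℝ → ENNReal} (hf : Measurable f)
    (hshift : ∀ d, |d| ≤ Δ → ∀ x, f x ≤ ENNReal.ofReal (exp ε) * f (x + d)) (δ : ℝ) :
    SatisfiesDP ε δ Δ (volume.withDensity f) := by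
  intro d hd S hS
  have hemb : MeasurableEmbedding fun s : ℝ => s + d := measurableEmbedding_addRight d
  rw [withDensity_apply _ hS, withDensity_apply _ (hemb.measurableSet_image.2 hS),
    ← (measurePreserving_add_right volume d).setLIntegral_comp_emb hemb,
    ← lintegral_const_mul _ (by fun_prop)]
  exact (lintegral_mono (hshift d hd)).trans le_self_add

theorem integral_abs_rpow_mul_exp_neg_mul_abs {s r : ℝ} (hs : -1 < s) (hr : 0 < r) :
    ∫ x : ℝ, |x| ^ s * exp (-(r * |x|)) = 2 * ((1 / r) ^ (s + 1) * Gamma (s + 1)) := by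
  rw [integral_comp_abs (f := fun x => x ^ s * exp (-(r * x))),
    ← integral_rpow_mul_exp_neg_mul_Ioi (by linarith) hr, add_sub_cancel_right]

/-- The Laplace distribution on `ℝ` centred at `0` with scale `b`, the witness for the upper
bound `Δ / ε`. It is a probability measure only for `b > 0`. -/
noncomputable def laplaceMeasure (b : ℝ) : Measure ℝ :=
  volume.withDensity fun x => ENNReal.ofReal ((2 * b)⁻¹ * exp (-(b⁻¹ * |x|)))

section laplaceMeasure

variable {b : ℝ}

theorem lintegral_abs_rpow_laplaceMeasure (hb : 0 < b) {s : ℝ} (hs : -1 < s) :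
    ∫⁻ x, ENNReal.ofReal (|x| ^ s) ∂laplaceMeasure b = ENNReal.ofReal (b ^ s * Gamma (s + 1)) := by
  have hintegral : ∫ x : ℝ, (2 * b)⁻¹ * (|x| ^ s * exp (-(b⁻¹ * |x|))) = b ^ s * Gamma (s + 1) := by
    rw [integral_const_mul, integral_abs_rpow_mul_exp_neg_mul_abs hs (inv_pos.2 hb), one_div,
      inv_inv, rpow_add_one hb.ne']
    field_simp
  have hne : ∫ x : ℝ, (2 * b)⁻¹ * (|x| ^ s * exp (-(b⁻¹ * |x|))) ≠ 0 := by
    have := Gamma_pos_of_pos (neg_lt_iff_pos_add.1 hs)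
    rw [hintegral]
    positivity
  rw [laplaceMeasure, lintegral_withDensity_eq_lintegral_mul _ (by fun_prop) (by fun_prop),
    ← hintegral, ofReal_integral_eq_lintegral_ofReal (.of_integral_ne_zero hne)
      (ae_of_all _ fun x => by positivity)]
  refine lintegral_congr fun x => ?_
  rw [Pi.mul_apply, ← ENNReal.ofReal_mul (by positivity), mul_assoc, mul_comm (exp _)]

theorem isProbabilityMeasure_laplaceMeasure (hb : 0 < b) :
    IsProbabilityMeasure (laplaceMeasure b) :=
  ⟨by simpa using lintegral_abs_rpow_laplaceMeasure hb (s := 0) (by norm_num)⟩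

theorem lintegral_abs_laplaceMeasure (hb : 0 < b) :
    ∫⁻ x, ENNReal.ofReal |x| ∂laplaceMeasure b = ENNReal.ofReal b := by
  simpa [one_add_one_eq_two] using lintegral_abs_rpow_laplaceMeasure hb (s := 1) (by norm_num)

theorem satisfiesDP_laplaceMeasure (hb : 0 ≤ b) (δ Δ : ℝ) :
    SatisfiesDP (Δ / b) δ Δ (laplaceMeasure b) := by
  refine satisfiesDP_withDensity (by fun_prop) (fun d hd x => ?_) δ
  have hexponent : -(b⁻¹ * |x|) ≤ Δ / b + -(b⁻¹ * |x + d|) := by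
    have habs : |x + d| ≤ |x| + Δ := (abs_add_le x d).trans (by gcongr)
    have := mul_le_mul_of_nonneg_left habs (inv_nonneg.2 hb)
    rw [div_eq_inv_mul]
    linarith
  rw [← ENNReal.ofReal_mul (exp_nonneg _), mul_left_comm, ← exp_add]
  gcongr

end laplaceMeasure

theorem VoptL1_le {ε Δ : ℝ} (hε : 0 < ε) (hΔ : 0 < Δ) (δ : ℝ) :
    VoptL1 ε δ Δ ≤ ENNReal.ofReal (Δ / ε) := by
  have hb : 0 < Δ / ε := div_pos hΔ hε
  have hdp := satisfiesDP_laplaceMeasure hb.le δ Δ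
  rw [div_div_cancel₀ hΔ.ne'] at hdp
  rw [← lintegral_abs_laplaceMeasure hb]
  exact iInf₂_le_of_le _ (isProbabilityMeasure_laplaceMeasure hb) (iInf_le _ hdp)

/-- For fixed ε > 0 and Δ > 0, as δ → 0⁺ the minimum noise amplitude
satisfies liminf ≥ Δ/(e^ε − 1) and limsup ≤ Δ/ε, with multiplicative gap
ε/(e^ε − 1). -/
theorem VoptL1_asymptotics_delta_to_zero
    (ε Δ : ℝ) (hε : 0 < ε) (hΔ : 0 < Δ) :
    Filter.liminf (fun δ : ℝ => VoptL1 ε δ Δ) (nhdsWithin 0 (Set.Ioi 0))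
        ≥ ENNReal.ofReal (Δ / (Real.exp ε - 1))
      ∧ Filter.limsup (fun δ : ℝ => VoptL1 ε δ Δ) (nhdsWithin 0 (Set.Ioi 0))
        ≤ ENNReal.ofReal (Δ / ε)
      ∧ (Δ / (Real.exp ε - 1)) / (Δ / ε) = ε / (Real.exp ε - 1) := by
  refine ⟨le_liminf_VoptL1 hε hΔ, ?_, div_div_div_cancel_left' _ _ hΔ.ne'⟩
  exact (limsup_le_limsup (.of_forall (VoptL1_le hε hΔ))).trans_eq (limsup_const _)
end
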